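/- (Flux Lemma, Lemma 2.1.) Let d ≥ 1, 0 < m < 1 and 0 < 2R < R₀. There exists a positive constant k₀ depending only on d such that the following holds. Let u solve the minimal Dirichlet problem for the FDE ∂ₜu = Δ(u^m) on B_{R₀}(x₀) with nonnegative initial data u₀ supported in the closure of B_R(x₀) and extinction time T. Then for every 0 ≤ s ≤ T: k₀ (R₀ − 2R)² ∫_{B_{R₀}(x₀)} u(s,x) dx ≤ ∫_s^T ∫_{A₀} u(t,x)^m dx dt, where A₀ = B_{R₀}(x₀) \ B_{2R}(x₀). -/

import Mathlib

open MeasureTheory Metric Set Real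

/-- The spatial Laplacian of `f : ℝ^d → ℝ` at a point, as the sum of second
coordinate derivatives. -/
noncomputable def spaceLap {d : ℕ} (f : EuclideanSpace ℝ (Fin d) → ℝ)
    (x : EuclideanSpace ℝ (Fin d)) : ℝ :=
  ∑ i : Fin d, fderiv ℝ (fun y => fderiv ℝ f y (EuclideanSpace.single i 1)) x
    (EuclideanSpace.single i 1)

/-- `u` is a classical solution of the fast diffusion equation `∂ₜ u = Δ(u^m)`
on the space-time set `Q`: it is positive and smooth on `Q` and satisfies the
equation pointwise on `Q`. -/
def IsFDESol {d : ℕ} (m : ℝ) (Q : Set (ℝ × EuclideanSpace ℝ (Fin d)))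
    (u : ℝ → EuclideanSpace ℝ (Fin d) → ℝ) : Prop :=
  (∀ p ∈ Q, 0 < u p.1 p.2) ∧
  ContDiffOn ℝ (⊤ : ℕ∞) (fun p : ℝ × EuclideanSpace ℝ (Fin d) => u p.1 p.2) Q ∧
  ∀ p ∈ Q, deriv (fun s => u s p.2) p.1 = spaceLap (fun y => u p.1 y ^ m) p.2

/-- `u` solves the homogeneous Dirichlet problem for the FDE `∂ₜ u = Δ(u^m)` on the
ball `B_ρ(x₀)` with initial data `u₀` and extinction time `T`. -/
def IsDirichletSol {d : ℕ} (m : ℝ) (x₀ : EuclideanSpace ℝ (Fin d)) (ρ T : ℝ)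
    (u : ℝ → EuclideanSpace ℝ (Fin d) → ℝ) (u₀ : EuclideanSpace ℝ (Fin d) → ℝ) : Prop :=
  (∀ t ∈ Icc 0 T, ∀ x ∈ closedBall x₀ ρ, 0 ≤ u t x) ∧
  ContinuousOn (fun p : ℝ × EuclideanSpace ℝ (Fin d) => u p.1 p.2)
    (Icc 0 T ×ˢ closedBall x₀ ρ) ∧
  IsFDESol m (Ioo 0 T ×ˢ ball x₀ ρ) u ∧
  (∀ x ∈ ball x₀ ρ, u 0 x = u₀ x) ∧
  (∀ t ∈ Ioc 0 T, ∀ x ∈ sphere x₀ ρ, u t x = 0) ∧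
  (∀ x ∈ closedBall x₀ ρ, u T x = 0) ∧
  ∀ t ∈ Ioo 0 T, ∃ x ∈ ball x₀ ρ, u t x ≠ 0


open Topology Filter

theorem fx_ftc_pos (a b : ℝ) (hab : a ≤ b) (w w' : ℝ → ℝ)
    (hw : ∀ t ∈ Icc a b, HasDerivAt w (w' t) t) (hw' : ContinuousOn w' (Icc a b)) :
    ∃ S : Set ℝ, MeasurableSet S ∧ S ⊆ Icc a b ∧ (∀ t ∈ Icc a b, t ∉ S → w t ≤ 0) ∧
      (∀ t ∈ S, 0 ≤ w t) ∧ - max (w a) 0 ≤ ∫ t in S, w' t := by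
  have hwc : ContinuousOn w (Icc a b) := fun t ht => (hw t ht).continuousAt.continuousWithinAt
  set W := IccExtend hab ((Icc a b).domRestrict w) with hW
  set W' := IccExtend hab ((Icc a b).domRestrict w') with hW'
  have cW : Continuous W := (continuousOn_iff_continuous_domRestrict.1 hwc).Icc_extend'
  have cW' : Continuous W' := (continuousOn_iff_continuous_domRestrict.1 hw').Icc_extend'
  have eW : ∀ t ∈ Icc a b, W t = w t := fun t ht => by
    simp [hW, IccExtend_of_mem hab _ ht]
  have eW' : ∀ t ∈ Icc a b, W' t = w' t := fun t ht => by
    simp [hW', IccExtend_of_mem hab _ ht]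
  set S0 : Set ℝ := {t | 0 < W t} ∪ ({t | W t = 0} ∩ {t | 0 < W' t}) with hS0
  have mS0 : MeasurableSet S0 :=
    (isOpen_lt continuous_const cW).measurableSet.union
      ((isClosed_eq cW continuous_const).measurableSet.inter
        (isOpen_lt continuous_const cW').measurableSet)
  refine ⟨S0 ∩ Icc a b, mS0.inter measurableSet_Icc, inter_subset_right, ?_, ?_, ?_⟩
  · intro t ht hn
    by_contra! h
    exact hn ⟨Or.inl (by simpa [eW t ht] using h), ht⟩
  · rintro t ⟨h, ht⟩
    rcases h with h | h
    · have : 0 < W t := h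
      rw [eW t ht] at this; exact this.le
    · have : W t = 0 := h.1
      rw [eW t ht] at this; exact this.ge
  · have key := intervalIntegral.sub_le_integral_of_hasDeriv_right_of_le (g := fun t => max (w t) 0)
      (g' := S0.indicator w') (φ := S0.indicator w') hab
      (hwc.sup continuousOn_const) ?_ ?_ (fun _ _ => le_rfl)
    · rw [intervalIntegral.integral_of_le hab, integral_indicator mS0,
        Measure.restrict_restrict mS0] at key
      have e : ∫ t in S0 ∩ Icc a b, w' t = ∫ t in S0 ∩ Ioc a b, w' t :=
        setIntegral_congr_set (ae_eq_set_inter (ae_eq_refl _) Ioc_ae_eq_Icc.symm)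
      rw [e]
      have : 0 ≤ max (w b) 0 := le_max_right _ _
      linarith
    · intro t ht
      have ht' := Ioo_subset_Icc_self ht
      have hd := hw t ht'
      have hE := eW t ht'
      have hE' := eW' t ht'
      rcases lt_trichotomy (w t) 0 with h | h | h
      · have hn : t ∉ S0 := by
          rintro (h1 | h1)
          · have : 0 < W t := h1
            linarith
          · have : W t = 0 := h1.1
            linarith
        rw [indicator_of_notMem hn]
        have : (fun t => max (w t) 0) =ᶠ[𝓝 t] fun _ => 0 := by
          filter_upwards [hd.continuousAt.eventually (gt_mem_nhds h)] with s hs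
          exact max_eq_right hs.le
        exact ((hasDerivAt_const t (0:ℝ)).congr_of_eventuallyEq this).hasDerivWithinAt
      · rcases lt_or_ge 0 (w' t) with h' | h'
        · have hm : t ∈ S0 := Or.inr ⟨by simp [hE, h], by simpa [hE'] using h'⟩
          rw [indicator_of_mem hm]
          have hev : ∀ᶠ s in 𝓝[>] t, 0 < slope w t s := by
            have := (hasDerivAt_iff_tendsto_slope.1 hd).eventually (lt_mem_nhds h')
            exact this.filter_mono (nhdsWithin_mono _ (fun s hs => ne_of_gt hs))
          refine hd.hasDerivWithinAt.congr_of_eventuallyEq ?_ (by simp [h])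
          filter_upwards [hev, self_mem_nhdsWithin] with s hs hs'
          have hs'' : t < s := hs'
          rw [slope_def_field, h, sub_zero] at hs
          have : 0 < w s := by
            by_contra! hc
            exact absurd hs (not_lt.2 (div_nonpos_of_nonpos_of_nonneg hc (by linarith)))
          exact max_eq_left this.le
        · have hn : t ∉ S0 := by
            rintro (h1 | h1)
            · have : 0 < W t := h1
              linarith
            · have : 0 < W' t := h1.2
              linarith
          rw [indicator_of_notMem hn]
          rcases h'.lt_or_eq with h'' | h''
          · have hev : ∀ᶠ s in 𝓝[>] t, slope w t s < 0 := by
              have := (hasDerivAt_iff_tendsto_slope.1 hd).eventually (gt_mem_nhds h'')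
              exact this.filter_mono (nhdsWithin_mono _ (fun s hs => ne_of_gt hs))
            refine (hasDerivAt_const t (0:ℝ)).hasDerivWithinAt.congr_of_eventuallyEq ?_ (by simp [h])
            filter_upwards [hev, self_mem_nhdsWithin] with s hs hs'
            have hs'' : t < s := hs'
            rw [slope_def_field, h, sub_zero] at hs
            have : w s < 0 := by
              by_contra! hc
              exact absurd hs (not_lt.2 (div_nonneg hc (by linarith)))
            exact max_eq_right this.le
          · rw [h''] at hd
            have : HasDerivAt (fun t => max (w t) 0) 0 t := by
              rw [hasDerivAt_iff_isLittleO] at hd ⊢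
              refine (Asymptotics.IsBigO.of_bound 1 (Eventually.of_forall fun s => ?_)).trans_isLittleO hd
              have := abs_max_sub_max_le_abs (w s) (w t) 0
              simpa using this
            exact this.hasDerivWithinAt
      · have hm : t ∈ S0 := Or.inl (by simpa [hE] using h)
        rw [indicator_of_mem hm]
        have : (fun t => max (w t) 0) =ᶠ[𝓝 t] w := by
          filter_upwards [hd.continuousAt.eventually (lt_mem_nhds h)] with s hs
          exact max_eq_left hs.le
        exact (hd.congr_of_eventuallyEq this).hasDerivWithinAt
    · exact (hw'.integrableOn_Icc).indicator mS0

theorem fx_second_diff (g g1 g2 : ℝ → ℝ) (a h : ℝ) (hh : 0 ≤ h)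
    (h1 : ∀ s ∈ Icc (-h) h, HasDerivAt g (g1 s) s)
    (h2 : ∀ s ∈ Icc (-h) h, HasDerivAt g1 (g2 s) s)
    (ha : ∀ s ∈ Icc (-h) h, a ≤ g2 s) :
    a * h ^ 2 ≤ g h + g (-h) - 2 * g 0 := by
  have hneg : ∀ s ∈ Icc 0 h, -s ∈ Icc (-h) h ∧ s ∈ Icc (-h) h := fun s hs =>
    ⟨⟨by linarith [hs.2], by linarith [hs.1]⟩, ⟨by linarith [hs.1], hs.2⟩⟩
  have d2 : ∀ s ∈ Icc 0 h, HasDerivAt (fun s => g1 s - g1 (-s) - 2 * a * s)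
      (g2 s + g2 (-s) - 2 * a) s := fun s hs => by
    have A := h2 s (hneg s hs).2
    have B := (h2 (-s) (hneg s hs).1).scomp s (hasDerivAt_neg s)
    have C := (A.sub B).sub ((hasDerivAt_id s).const_mul (2 * a))
    exact C.congr_deriv (by simp; try ring)
  have d1 : ∀ s ∈ Icc 0 h, HasDerivAt (fun s => g s + g (-s) - a * s ^ 2)
      (g1 s - g1 (-s) - 2 * a * s) s := fun s hs => by
    have A := h1 s (hneg s hs).2
    have B := (h1 (-s) (hneg s hs).1).scomp s (hasDerivAt_neg s)
    have C := (A.add B).sub ((hasDerivAt_pow 2 s).const_mul a)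
    exact C.congr_deriv (by simp; try ring)
  have m2 : MonotoneOn (fun s => g1 s - g1 (-s) - 2 * a * s) (Icc 0 h) := by
    refine monotoneOn_of_hasDerivWithinAt_nonneg (convex_Icc 0 h)
      (fun s hs => (d2 s hs).continuousAt.continuousWithinAt)
      (fun s hs => (d2 s (interior_subset hs)).hasDerivWithinAt) (fun s hs => ?_)
    have := interior_subset hs
    linarith [ha s (hneg s this).2, ha _ (hneg s this).1]
  have m1 : MonotoneOn (fun s => g s + g (-s) - a * s ^ 2) (Icc 0 h) := by
    refine monotoneOn_of_hasDerivWithinAt_nonneg (convex_Icc 0 h)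
      (fun s hs => (d1 s hs).continuousAt.continuousWithinAt)
      (fun s hs => (d1 s (interior_subset hs)).hasDerivWithinAt) (fun s hs => ?_)
    have hs' := interior_subset hs
    have := m2 (left_mem_Icc.2 hh) hs' hs'.1
    simpa using this
  have := m1 (left_mem_Icc.2 hh) (right_mem_Icc.2 hh) hh
  simp only [neg_zero] at this
  nlinarith

open scoped ContDiff

noncomputable def fxD {E : Type*} [NormedAddCommGroup E] [NormedSpace ℝ E] (v : E)
    (f : ℝ × E → ℝ) : ℝ × E → ℝ := fun p => fderiv ℝ f p (0, v)

theorem fxD_smooth {E : Type*} [NormedAddCommGroup E] [NormedSpace ℝ E] (v : E)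
    {f : ℝ × E → ℝ} {Q : Set (ℝ × E)} (hQ : IsOpen Q) (hf : ContDiffOn ℝ ∞ f Q) :
    ContDiffOn ℝ ∞ (fxD v f) Q :=
  (hf.fderiv_of_isOpen hQ (m := ∞) (by simp)).clm_apply contDiffOn_const

theorem fxD_line {E : Type*} [NormedAddCommGroup E] [NormedSpace ℝ E] (v : E)
    {f : ℝ × E → ℝ} {Q : Set (ℝ × E)} (hQ : IsOpen Q) (hf : ContDiffOn ℝ ∞ f Q)
    (t s : ℝ) (x : E) (h : (t, x + s • v) ∈ Q) :
    HasDerivAt (fun s : ℝ => f (t, x + s • v)) (fxD v f (t, x + s • v)) s := by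
  have h1 : HasFDerivAt f (fderiv ℝ f (t, x + s • v)) (t, x + s • v) :=
    ((hf.contDiffAt (hQ.mem_nhds h)).differentiableAt (by simp)).hasFDerivAt
  have h2 : HasDerivAt (fun s : ℝ => (t, x + s • v)) ((0 : ℝ), v) s := by
    refine (hasDerivAt_const s t).prodMk ?_
    simpa using ((hasDerivAt_id s).smul_const v).const_add x
  exact h1.comp_hasDerivAt s h2

theorem fxD_slice {E : Type*} [NormedAddCommGroup E] [NormedSpace ℝ E] (v : E)
    {f : ℝ × E → ℝ} {Q : Set (ℝ × E)} (hQ : IsOpen Q) (hf : ContDiffOn ℝ ∞ f Q)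
    (t : ℝ) (x : E) (h : (t, x) ∈ Q) :
    fderiv ℝ (fun y => f (t, y)) x v = fxD v f (t, x) := by
  have h1 : HasFDerivAt f (fderiv ℝ f (t, x)) (t, x) :=
    ((hf.contDiffAt (hQ.mem_nhds h)).differentiableAt (by simp)).hasFDerivAt
  have h2 : HasFDerivAt (fun y : E => (t, y)) (ContinuousLinearMap.inr ℝ ℝ E) x :=
    hasFDerivAt_prodMk_right t x
  have h3 := (h1.comp x h2).fderiv
  have h4 : (f ∘ fun y : E => (t, y)) = fun y => f (t, y) := rfl
  rw [h4] at h3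
  rw [h3]
  simp [fxD]

theorem fx_slice2 {E : Type*} [NormedAddCommGroup E] [NormedSpace ℝ E] (v : E)
    {f : ℝ × E → ℝ} {Q : Set (ℝ × E)} (hQ : IsOpen Q) (hf : ContDiffOn ℝ ∞ f Q)
    (t : ℝ) (x : E) (h : (t, x) ∈ Q) :
    fderiv ℝ (fun y => fderiv ℝ (fun z => f (t, z)) y v) x v = fxD v (fxD v f) (t, x) := by
  have hev : (fun y => fderiv ℝ (fun z => f (t, z)) y v) =ᶠ[𝓝 x] fun y => fxD v f (t, y) := by
    have : ∀ᶠ y in 𝓝 x, (t, y) ∈ Q :=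
      (Continuous.prodMk_right t).continuousAt.eventually (hQ.mem_nhds h)
    filter_upwards [this] with y hy
    exact fxD_slice v hQ hf t y hy
  rw [hev.fderiv_eq]
  exact fxD_slice v hQ (fxD_smooth v hQ hf) t x h

theorem fx_spaceLap {d : ℕ} {f : ℝ × EuclideanSpace ℝ (Fin d) → ℝ}
    {Q : Set (ℝ × EuclideanSpace ℝ (Fin d))} (hQ : IsOpen Q) (hf : ContDiffOn ℝ ∞ f Q)
    (t : ℝ) (x : EuclideanSpace ℝ (Fin d)) (h : (t, x) ∈ Q) :
    spaceLap (fun y => f (t, y)) x =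
      ∑ i : Fin d, fxD (EuclideanSpace.single i 1) (fxD (EuclideanSpace.single i 1) f) (t, x) := by
  unfold spaceLap
  exact Finset.sum_congr rfl fun i _ => fx_slice2 _ hQ hf t x h

/-- uniform lower semicontinuity near a compact time slab -/
theorem fx_unif {E : Type*} [NormedAddCommGroup E] [NormedSpace ℝ E]
    {H : ℝ × E → ℝ} {Q : Set (ℝ × E)} (hQ : IsOpen Q) (hH : ContinuousOn H Q)
    (a b : ℝ) (x : E) (hx : ∀ t ∈ Icc a b, (t, x) ∈ Q) (η : ℝ) (hη : 0 < η) :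
    ∃ r > 0, ∀ t ∈ Icc a b, ∀ y, ‖y - x‖ ≤ r → (t, y) ∈ Q ∧ H (t, x) - η ≤ H (t, y) := by
  have key : ∀ᶠ y in 𝓝 x, ∀ t ∈ Icc a b, (t, y) ∈ Q ∧ H (t, x) - η ≤ H (t, y) := by
    refine isCompact_Icc.eventually_forall_of_forall_eventually ?_
    intro t ht
    have h1 : ∀ᶠ p : E × ℝ in 𝓝 (x, t), (p.2, p.1) ∈ Q :=
      continuous_swap.continuousAt.eventually (hQ.mem_nhds (hx t ht))
    have c1 : ContinuousAt H (t, x) := hH.continuousAt (hQ.mem_nhds (hx t ht))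
    have c2 : ContinuousAt (fun p : E × ℝ => H (p.2, p.1)) (x, t) :=
      ContinuousAt.comp (f := fun p : E × ℝ => (p.2, p.1)) (g := H) c1 continuous_swap.continuousAt
    have c3 : ContinuousAt (fun p : E × ℝ => H (p.2, x)) (x, t) :=
      ContinuousAt.comp (f := fun p : E × ℝ => (p.2, x)) (g := H) c1
        (by fun_prop)
    have c4 := (c2.sub c3).eventually (lt_mem_nhds (a := -η) (by simp [hη]))
    filter_upwards [h1, c4] with p hp hp'
    refine ⟨hp, ?_⟩
    simp only [Pi.sub_apply] at hp'
    linarith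
  obtain ⟨r, hr, h⟩ := Metric.eventually_nhds_iff.1 key
  refine ⟨r / 2, by linarith, fun t ht y hy => h ?_ t ht⟩
  rw [dist_eq_norm]; linarith

theorem fx_touch {d : ℕ} (T : ℝ) (D : Set (EuclideanSpace ℝ (Fin d))) (hD : IsOpen D)
    (G w : ℝ × EuclideanSpace ℝ (Fin d) → ℝ)
    (hG : ContDiffOn ℝ ∞ G (Ioo 0 T ×ˢ D))
    (hw : ∀ t ∈ Ioo 0 T, ∀ x ∈ D,
      HasDerivAt (fun s => w (s, x)) (spaceLap (fun y => G (t, y)) x) t)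
    (s1 : ∀ t ∈ Ioo 0 T, ∀ x ∈ D, w (t, x) ≤ 0 → G (t, x) ≤ 0)
    (s2 : ∀ t ∈ Ioo 0 T, ∀ x ∈ D, 0 ≤ w (t, x) → 0 ≤ G (t, x))
    (t1 t2 : ℝ) (h1 : 0 < t1) (h12 : t1 ≤ t2) (h2 : t2 < T)
    (x p : EuclideanSpace ℝ (Fin d)) (hx : x ∈ D) (c : ℝ)
    (hmax : ∀ y ∈ D, (∫ t in Icc t1 t2, max (G (t, y)) 0) + c * ‖y - p‖ ^ 2 ≤
      (∫ t in Icc t1 t2, max (G (t, x)) 0) + c * ‖x - p‖ ^ 2) :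
    2 * c * d ≤ max (w (t1, x)) 0 := by
  have hQ : IsOpen (Ioo 0 T ×ˢ D) := isOpen_Ioo.prod hD
  have hsub : Icc t1 t2 ⊆ Ioo 0 T := fun t ht => ⟨by linarith [ht.1], by linarith [ht.2]⟩
  have contslice : ∀ (f : ℝ × EuclideanSpace ℝ (Fin d) → ℝ), ContDiffOn ℝ ∞ f (Ioo 0 T ×ˢ D) →
      ∀ y ∈ D, ContinuousOn (fun t => f (t, y)) (Icc t1 t2) := fun f hf y hy =>
    hf.continuousOn.comp (by fun_prop) (fun t ht => ⟨hsub ht, hy⟩)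
  have hHs : ∀ i : Fin d, ContDiffOn ℝ ∞
      (fxD (EuclideanSpace.single i 1) (fxD (EuclideanSpace.single i 1) G)) (Ioo 0 T ×ˢ D) :=
    fun i => fxD_smooth _ hQ (fxD_smooth _ hQ hG)
  have hlap : ∀ t ∈ Icc t1 t2, spaceLap (fun y => G (t, y)) x =
      ∑ i : Fin d, fxD (EuclideanSpace.single i 1) (fxD (EuclideanSpace.single i 1) G) (t, x) :=
    fun t ht => fx_spaceLap hQ hG t x ⟨hsub ht, hx⟩
  have hlapc : ContinuousOn (fun t => spaceLap (fun y => G (t, y)) x) (Icc t1 t2) := by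
    refine ContinuousOn.congr ?_ hlap
    exact continuousOn_finsetSum _ fun i _ => contslice _ (hHs i) x hx
  obtain ⟨S, mS, SI, Sn, Sp, hS⟩ := fx_ftc_pos t1 t2 h12 (fun t => w (t, x)) _
    (fun t ht => hw t (hsub ht) x hx) hlapc
  have intS : ∀ (g : ℝ → ℝ), ContinuousOn g (Icc t1 t2) → IntegrableOn g S := fun g hg =>
    hg.integrableOn_Icc.mono_set SI
  -- touching
  have hYx : ∫ t in S, G (t, x) = ∫ t in Icc t1 t2, max (G (t, x)) 0 := by
    rw [← integral_indicator mS, ← integral_indicator measurableSet_Icc]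
    congr 1
    ext t
    by_cases hI : t ∈ Icc t1 t2
    · rw [indicator_of_mem hI]
      by_cases hs : t ∈ S
      · rw [indicator_of_mem hs, max_eq_left (s2 t (hsub hI) x hx (Sp t hs))]
      · rw [indicator_of_notMem hs, max_eq_right (s1 t (hsub hI) x hx (Sn t hI hs))]
    · rw [indicator_of_notMem hI, indicator_of_notMem (fun h => hI (SI h))]
  have hYle : ∀ y ∈ D, ∫ t in S, G (t, y) ≤ ∫ t in Icc t1 t2, max (G (t, y)) 0 := by
    intro y hy
    have cG := contslice G hG y hy
    have cM : ContinuousOn (fun t => max (G (t, y)) 0) (Icc t1 t2) := cG.sup continuousOn_const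
    calc ∫ t in S, G (t, y) ≤ ∫ t in S, max (G (t, y)) 0 :=
          setIntegral_mono (intS _ cG) (intS _ cM) (fun t => le_max_left _ _)
      _ ≤ _ := setIntegral_mono_set cM.integrableOn_Icc
          (Eventually.of_forall fun t => le_max_right _ _) (LE.le.eventuallyLE SI)
  have hdir : ∀ i : Fin d, ∫ t in S,
      fxD (EuclideanSpace.single i 1) (fxD (EuclideanSpace.single i 1) G) (t, x) ≤ - (2 * c) := by
    intro i
    set v : EuclideanSpace ℝ (Fin d) := EuclideanSpace.single i 1 with hv
    have nv : ‖v‖ = 1 := by simp [hv]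
    set H := fxD v (fxD v G) with hH
    refine le_of_forall_pos_le_add fun ε hε => ?_
    set η := ε / (t2 - t1 + 1) with hη
    have hpos : 0 < t2 - t1 + 1 := by linarith
    obtain ⟨r, hr, hu⟩ := fx_unif hQ (hHs i).continuousOn t1 t2 x (fun t ht => ⟨hsub ht, hx⟩) η
      (by positivity)
    have cx := contslice G hG x hx
    have cH : ContinuousOn (fun t => H (t, x)) (Icc t1 t2) := contslice _ (hHs i) x hx
    have cpm : ∀ y z, ContinuousOn (fun t => G (t, y)) (Icc t1 t2) →
        ContinuousOn (fun t => G (t, z)) (Icc t1 t2) →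
        ContinuousOn (fun t => G (t, y) + G (t, z)) (Icc t1 t2) := fun y z hy hz => hy.add hz
    have hmem : ∀ s ∈ Icc (-r) r, ∀ t ∈ Icc t1 t2, (t, x + s • v) ∈ Ioo 0 T ×ˢ D ∧
        H (t, x) - η ≤ H (t, x + s • v) := by
      intro s hs t ht
      refine hu t ht _ ?_
      rw [add_sub_cancel_left, norm_smul, nv, mul_one]
      exact abs_le.2 hs
    have pt : ∀ t ∈ Icc t1 t2, (H (t, x) - η) * r ^ 2 ≤
        G (t, x + r • v) + G (t, x + (-r) • v) - 2 * G (t, x) := by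
      intro t ht
      have := fx_second_diff (fun s => G (t, x + s • v)) (fun s => fxD v G (t, x + s • v))
        (fun s => H (t, x + s • v)) (H (t, x) - η) r hr.le
        (fun s hs => fxD_line v hQ hG t s x (hmem s hs t ht).1)
        (fun s hs => fxD_line v hQ (fxD_smooth v hQ hG) t s x (hmem s hs t ht).1)
        (fun s hs => (hmem s hs t ht).2)
      simpa using this
    have hp : x + r • v ∈ D :=
      (hmem r ⟨by linarith, le_rfl⟩ t1 ⟨le_rfl, h12⟩).1.2
    have hm : x + (-r) • v ∈ D :=
      (hmem (-r) ⟨le_rfl, by linarith⟩ t1 ⟨le_rfl, h12⟩).1.2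
    have cp := contslice G hG _ hp
    have cm := contslice G hG _ hm
    have I1 : ∫ t in S, (H (t, x) - η) * r ^ 2 ≤
        ∫ t in S, (G (t, x + r • v) + G (t, x + (-r) • v) - 2 * G (t, x)) := by
      refine setIntegral_mono_on ?_ ?_ mS (fun t ht => pt t (SI ht))
      · exact intS _ ((cH.sub continuousOn_const).mul continuousOn_const)
      · exact intS _ ((cp.add cm).sub (continuousOn_const.mul cx))
    rw [integral_mul_const, integral_sub (intS _ cH) (intS _ continuousOn_const),
      integral_sub (intS _ (cpm _ _ cp cm)) ((intS _ cx).const_mul 2),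
      integral_add (intS _ cp) (intS _ cm), integral_const_mul] at I1
    have A1 := hmax _ hp
    have A2 := hmax _ hm
    have B1 := hYle _ hp
    have B2 := hYle _ hm
    rw [← hYx] at A1 A2
    have par : ‖x + r • v - p‖ ^ 2 + ‖x + (-r) • v - p‖ ^ 2 = 2 * ‖x - p‖ ^ 2 + 2 * r ^ 2 := by
      have := parallelogram_law_with_norm ℝ (x - p) (r • v)
      have e1 : x + r • v - p = x - p + r • v := by abel
      have e2 : x + (-r) • v - p = x - p - r • v := by rw [neg_smul]; abel
      rw [e1, e2]
      have e3 : ‖r • v‖ = r := by rw [norm_smul, nv, mul_one, Real.norm_eq_abs, abs_of_pos hr]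
      rw [e3] at this
      nlinarith
    have hη' : ∫ t in S, η ≤ ε := by
      rw [setIntegral_const, smul_eq_mul]
      have : volume.real S ≤ t2 - t1 := by
        have := measureReal_mono (μ := volume) SI (by simp)
        simpa [Real.volume_real_Icc_of_le h12] using this
      calc volume.real S * η ≤ (t2 - t1 + 1) * η :=
            mul_le_mul_of_nonneg_right (by linarith) (by positivity)
        _ = ε := by rw [hη]; field_simp
    have hr2 : 0 < r ^ 2 := by positivity
    have : ((∫ t in S, H (t, x)) - ∫ t in S, η) * r ^ 2 ≤ - (2 * c) * r ^ 2 := by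
      have : c * ‖x + r • v - p‖ ^ 2 + c * ‖x + (-r) • v - p‖ ^ 2 =
          c * (2 * ‖x - p‖ ^ 2 + 2 * r ^ 2) := by rw [← par]; ring
      nlinarith
    have := le_of_mul_le_mul_right this hr2
    linarith
  have hsum : ∫ t in S, spaceLap (fun y => G (t, y)) x =
      ∑ i : Fin d, ∫ t in S,
        fxD (EuclideanSpace.single i 1) (fxD (EuclideanSpace.single i 1) G) (t, x) := by
    rw [← integral_finsetSum _ (fun i _ => intS _ (contslice _ (hHs i) x hx))]
    exact setIntegral_congr_fun mS (fun t ht => hlap t (SI ht))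
  rw [hsum] at hS
  have := Finset.sum_le_sum (fun i (_ : i ∈ Finset.univ) => hdir i)
  simp only [Finset.sum_const, Finset.card_univ, Fintype.card_fin, nsmul_eq_mul] at this
  linarith

theorem fx_compare {d : ℕ} (hd : 1 ≤ d) (T : ℝ) (D K : Set (EuclideanSpace ℝ (Fin d)))
    (hD : IsOpen D) (hK : IsCompact K) (hDK : D ⊆ K)
    (G w : ℝ × EuclideanSpace ℝ (Fin d) → ℝ)
    (hG : ContDiffOn ℝ ∞ G (Ioo 0 T ×ˢ D))
    (hw : ∀ t ∈ Ioo 0 T, ∀ x ∈ D,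
      HasDerivAt (fun s => w (s, x)) (spaceLap (fun y => G (t, y)) x) t)
    (s1 : ∀ t ∈ Ioo 0 T, ∀ x ∈ D, w (t, x) ≤ 0 → G (t, x) ≤ 0)
    (s2 : ∀ t ∈ Ioo 0 T, ∀ x ∈ D, 0 ≤ w (t, x) → 0 ≤ G (t, x))
    (cG : ContinuousOn G (Icc 0 T ×ˢ K)) (cw : ContinuousOn w (Icc 0 T ×ˢ K))
    (hb : ∀ t ∈ Ioo 0 T, ∀ x ∈ K, x ∉ D → G (t, x) ≤ 0)
    (h0 : ∀ x ∈ D, w (0, x) ≤ 0) :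
    ∀ t ∈ Ioo 0 T, ∀ x ∈ D, G (t, x) ≤ 0 := by
  intro t0 ht0 x0 hx0
  by_contra! hpos
  set t2 := (t0 + T) / 2 with ht2
  have h02 : t0 < t2 := by rw [ht2]; linarith [ht0.2]
  have h2T : t2 < T := by rw [ht2]; linarith [ht0.2]
  have contM : ∀ x ∈ K, ContinuousOn (fun t => max (G (t, x)) 0) (Icc 0 T) := fun x hx =>
    (cG.comp (f := fun t => (t, x)) (by fun_prop) (fun t ht => ⟨ht, hx⟩)).sup continuousOn_const
  set c0 := ∫ t in Icc t0 t2, max (G (t, x0)) 0 with hc0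
  have sub02 : Icc t0 t2 ⊆ Icc 0 T := Icc_subset_Icc ht0.1.le h2T.le
  have c0pos : 0 < c0 := by
    rw [hc0, integral_Icc_eq_integral_Ioc, ← intervalIntegral.integral_of_le h02.le]
    exact intervalIntegral.integral_pos h02 ((contM x0 (hDK hx0)).mono sub02)
      (fun t _ => le_max_right _ _) ⟨t0, ⟨le_rfl, h02.le⟩, lt_max_of_lt_left hpos⟩
  obtain ⟨M, hM⟩ := hK.isBounded.subset_closedBall x0
  have hMn : ∀ x ∈ K, ‖x - x0‖ ^ 2 ≤ M ^ 2 := fun x hx => by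
    have := mem_closedBall_iff_norm.1 (hM hx)
    gcongr
  set c := c0 / (2 * (M ^ 2 + 1)) with hc
  have cpos : 0 < c := by positivity
  have cM : c * M ^ 2 < c0 := by
    rw [hc, div_mul_eq_mul_div, div_lt_iff₀ (by positivity)]
    nlinarith [sq_nonneg M]
  have huc := (isCompact_Icc.prod hK).uniformContinuousOn_of_continuous cw
  obtain ⟨δ, hδ, hu⟩ := Metric.uniformContinuousOn_iff.1 huc c cpos
  set t1 := min (δ / 2) t0 with ht1
  have t1pos : 0 < t1 := lt_min (by linarith) ht0.1
  have h10 : t1 ≤ t0 := min_le_right _ _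
  have h12 : t1 ≤ t2 := by linarith
  have sub12 : Icc t1 t2 ⊆ Icc 0 T := Icc_subset_Icc t1pos.le h2T.le
  obtain ⟨C, hC⟩ := (isCompact_Icc.prod hK).exists_bound_of_continuousOn cG
  have contZ : ContinuousOn (fun x => ∫ t in Icc t1 t2, max (G (t, x)) 0) K := by
    refine continuousOn_of_dominated (bound := fun _ => C) ?_ ?_ ?_ ?_
    · intro x hx
      exact ((contM x hx).mono sub12).aestronglyMeasurable measurableSet_Icc
    · intro x hx
      filter_upwards [ae_restrict_mem measurableSet_Icc] with t ht
      have := hC (t, x) ⟨sub12 ht, hx⟩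
      rw [Real.norm_eq_abs, abs_of_nonneg (le_max_right _ _)]
      rw [Real.norm_eq_abs] at this
      exact max_le ((le_abs_self _).trans this) ((abs_nonneg _).trans this)
    · exact integrable_const _
    · filter_upwards [ae_restrict_mem measurableSet_Icc] with t ht
      exact (cG.comp (f := fun x => (t, x)) (by fun_prop)
        (fun x hx => ⟨sub12 ht, hx⟩)).sup continuousOn_const
  have contF : ContinuousOn (fun x => (∫ t in Icc t1 t2, max (G (t, x)) 0) + c * ‖x - x0‖ ^ 2) K :=
    contZ.add (by fun_prop)
  obtain ⟨x, hxK, hx⟩ := hK.exists_isMaxOn ⟨x0, hDK hx0⟩ contF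
  have hx' : ∀ y ∈ K, (∫ t in Icc t1 t2, max (G (t, y)) 0) + c * ‖y - x0‖ ^ 2 ≤
      (∫ t in Icc t1 t2, max (G (t, x)) 0) + c * ‖x - x0‖ ^ 2 := fun y hy => hx hy
  have hxD : x ∈ D := by
    by_contra hn
    have z : ∫ t in Icc t1 t2, max (G (t, x)) 0 = 0 := by
      rw [setIntegral_congr_fun (g := fun _ => (0:ℝ)) measurableSet_Icc]
      · simp
      · intro t ht
        exact max_eq_right (hb t ⟨by linarith [ht.1], by linarith [ht.2]⟩ x hxK hn)
    have A := hx' x0 (hDK hx0)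
    rw [z] at A
    have B : c0 ≤ ∫ t in Icc t1 t2, max (G (t, x0)) 0 :=
      setIntegral_mono_set ((contM x0 (hDK hx0)).mono sub12).integrableOn_Icc
        (Eventually.of_forall fun t => le_max_right _ _)
        (LE.le.eventuallyLE (Icc_subset_Icc_left h10))
    have := mul_le_mul_of_nonneg_left (hMn x hxK) cpos.le
    simp only [sub_self, norm_zero] at A
    nlinarith
  have key := fx_touch T D hD G w hG hw s1 s2 t1 t2 t1pos h12 h2T x x0 hxD c
    (fun y hy => hx' y (hDK hy))
  have hw1 : w (t1, x) < c := by
    have := hu (t1, x) ⟨sub12 ⟨le_rfl, h12⟩, hxK⟩ (0, x)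
      ⟨⟨le_rfl, by linarith [ht0.1, ht0.2]⟩, hxK⟩ (by
        rw [Prod.dist_eq]
        simp only [dist_self]
        rw [Real.dist_eq, sub_zero, abs_of_pos t1pos]
        refine max_lt ?_ hδ
        have := min_le_left (δ / 2) t0
        linarith)
    rw [Real.dist_eq] at this
    have := (abs_lt.1 this).2
    linarith [h0 x hxD]
  have hd' : (1:ℝ) ≤ d := by exact_mod_cast hd
  have := max_lt hw1 cpos
  nlinarith

theorem fx_lap_eq {d : ℕ} {f : EuclideanSpace ℝ (Fin d) → ℝ} {x : EuclideanSpace ℝ (Fin d)}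
    (hf : ContDiffAt ℝ 2 f x) : spaceLap f x = (Laplacian.laplacian f : EuclideanSpace ℝ (Fin d) → ℝ) x := by
  rw [InnerProductSpace.laplacian_eq_iteratedFDeriv_orthonormalBasis f
    (EuclideanSpace.basisFun (Fin d) ℝ)]
  unfold spaceLap
  refine Finset.sum_congr rfl fun i _ => ?_
  rw [iteratedFDeriv_two_apply]
  have h1 : DifferentiableAt ℝ (fderiv ℝ f) x :=
    (hf.fderiv_right (m := 1) (by norm_num)).differentiableAt (by norm_num)
  rw [fderiv_clm_apply h1 (differentiableAt_const _)]
  simp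

theorem fx_lap_comp {d : ℕ} {f : EuclideanSpace ℝ (Fin d) → ℝ} {x b : EuclideanSpace ℝ (Fin d)}
    (L : EuclideanSpace ℝ (Fin d) ≃ₗᵢ[ℝ] EuclideanSpace ℝ (Fin d))
    (hf : ContDiffAt ℝ 2 f (L x + b)) :
    spaceLap (fun z => f (L z + b)) x = spaceLap f (L x + b) := by
  have hL : ContDiffAt ℝ 2 (fun z => L z + b) x := by
    exact (L.contDiff.add contDiff_const).contDiffAt
  have hc : ContDiffAt ℝ 2 (fun z => f (L z + b)) x := ContDiffAt.comp x hf hL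
  rw [fx_lap_eq hf, fx_lap_eq hc]
  rw [InnerProductSpace.laplacian_eq_iteratedFDeriv_orthonormalBasis f
    ((EuclideanSpace.basisFun (Fin d) ℝ).map L),
    InnerProductSpace.laplacian_eq_iteratedFDeriv_orthonormalBasis _
    (EuclideanSpace.basisFun (Fin d) ℝ)]
  refine Finset.sum_congr rfl fun i _ => ?_
  have h := L.toContinuousLinearEquiv.iteratedFDerivWithin_comp_right (fun z => f (z + b))
    uniqueDiffOn_univ (x := x) (mem_univ _) 2
  simp only [preimage_univ, iteratedFDerivWithin_univ] at h
  have h' : (fun z => f (z + b)) ∘ ⇑L.toContinuousLinearEquiv = fun z => f (L z + b) := rfl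
  rw [h', iteratedFDeriv_comp_add_right] at h
  rw [h, ContinuousMultilinearMap.compContinuousLinearMap_apply]
  congr 1
  ext j
  fin_cases j <;> simp

set_option maxHeartbeats 800000 in
theorem fx_half {d : ℕ} (hd : 1 ≤ d) (m : ℝ) (hm : 0 < m)
    (x₀ : EuclideanSpace ℝ (Fin d)) (R R₀ T : ℝ) (hR : 0 < R) (hRR : 2 * R < R₀)
    (u : ℝ → EuclideanSpace ℝ (Fin d) → ℝ) (u₀ : EuclideanSpace ℝ (Fin d) → ℝ)
    (hsupp : Function.support u₀ ⊆ closedBall x₀ R)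
    (hu : IsDirichletSol m x₀ R₀ T u u₀) :
    ∀ t ∈ Ico 0 T, ∀ x ∈ ball x₀ R₀, 2 * R ≤ ‖x - x₀‖ →
      u t x ≤ u t (x₀ + (1 / 2 : ℝ) • (x - x₀)) := by
  obtain ⟨hnn, hc, ⟨hpos, hsm, hpde⟩, hini, hbd, hT, -⟩ := hu
  have hu0 : ∀ y ∈ ball x₀ R₀, R < ‖y - x₀‖ → u 0 y = 0 := by
    intro y hy hy'
    rw [hini y hy]
    by_contra h
    have := mem_closedBall_iff_norm.1 (hsupp h)
    linarith
  intro t ht x hx hxR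
  have hxn : ‖x - x₀‖ < R₀ := mem_ball_iff_norm.1 hx
  rcases ht.1.eq_or_lt with h0 | h0
  · rw [← h0, hu0 x hx (by linarith)]
    refine hnn 0 ⟨le_rfl, by linarith [ht.2]⟩ _ ?_
    rw [mem_closedBall_iff_norm, add_sub_cancel_left, norm_smul]
    norm_num; linarith [norm_nonneg (x - x₀)]
  -- geometry
  set n := ‖x - x₀‖ with hn
  have npos : 0 < n := by linarith
  set e : EuclideanSpace ℝ (Fin d) := n⁻¹ • (x - x₀) with he
  have ne : ‖e‖ = 1 := by
    rw [he, norm_smul, norm_inv, norm_norm, ← hn]; field_simp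
  set κ := 3 * n / 4 with hκ
  have κR : R < κ := by rw [hκ]; linarith
  set L := (Submodule.span ℝ {e})ᗮ.reflection with hL
  have Lap : ∀ y, L y = y - (2 * inner ℝ e y) • e := by
    intro y
    rw [hL, Submodule.reflection_orthogonal_apply, Submodule.reflection_singleton_apply, ne]
    simp only [neg_sub, sub_right_inj]
    rw [← Nat.cast_smul_eq_nsmul ℝ, smul_smul]
    simp
  set b := x₀ - L x₀ + (2 * κ) • e with hb
  have σx : ∀ z, L z + b = x₀ + ((z - x₀) - (2 * (inner ℝ e (z - x₀) - κ)) • e) := by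
    intro z
    have : L z + b = x₀ + L (z - x₀) + (2 * κ) • e := by
      rw [hb, map_sub]; abel
    rw [this, Lap, mul_sub, sub_smul]; abel
  clear_value b L
  have σn : ∀ z, ‖(L z + b) - x₀‖ ^ 2 = ‖z - x₀‖ ^ 2 - 4 * κ * (inner ℝ e (z - x₀) - κ) := by
    intro z
    rw [σx, add_sub_cancel_left, norm_sub_sq_real, norm_smul, ne, mul_one, inner_smul_right,
      real_inner_comm, Real.norm_eq_abs, sq_abs]
    ring
  have κpos : 0 < κ := by linarith
  have σle : ∀ z, κ ≤ inner ℝ e (z - x₀) → ‖(L z + b) - x₀‖ ≤ ‖z - x₀‖ := by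
    intro z hz
    refine le_of_sq_le_sq ?_ (norm_nonneg _)
    rw [σn]
    nlinarith
  have cσ : Continuous (fun z => L z + b) := L.continuous.add continuous_const
  set Q : Set (ℝ × EuclideanSpace ℝ (Fin d)) := Ioo 0 T ×ˢ ball x₀ R₀ with hQ
  have oQ : IsOpen Q := isOpen_Ioo.prod isOpen_ball
  set D : Set (EuclideanSpace ℝ (Fin d)) := ball x₀ R₀ ∩ {z | κ < inner ℝ e (z - x₀)} with hD
  set K : Set (EuclideanSpace ℝ (Fin d)) := closedBall x₀ R₀ ∩ {z | κ ≤ inner ℝ e (z - x₀)}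
    with hK
  have oD : IsOpen D := isOpen_ball.inter (isOpen_lt continuous_const (by fun_prop))
  have cK : IsCompact K := (isCompact_closedBall _ _).inter_right
    (isClosed_le continuous_const (by fun_prop))
  have DK : D ⊆ K := fun z hz => ⟨ball_subset_closedBall hz.1, (show κ < inner ℝ e (z - x₀) from hz.2).le⟩
  have σK : ∀ z ∈ K, L z + b ∈ closedBall x₀ R₀ := fun z hz => by
    rw [mem_closedBall_iff_norm]
    exact (σle z hz.2).trans (mem_closedBall_iff_norm.1 hz.1)
  have σD : ∀ z ∈ D, L z + b ∈ ball x₀ R₀ := fun z hz => by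
    rw [mem_ball_iff_norm]
    exact (σle z (le_of_lt hz.2)).trans_lt (mem_ball_iff_norm.1 hz.1)
  have hUs : ContDiffOn ℝ ∞ (fun p : ℝ × EuclideanSpace ℝ (Fin d) => u p.1 p.2 ^ m) Q :=
    hsm.rpow_const_of_ne (fun p hp => (hpos p hp).ne')
  have hσs : ContDiff ℝ ∞ (fun p : ℝ × EuclideanSpace ℝ (Fin d) => (p.1, L p.2 + b)) :=
    contDiff_fst.prodMk ((L.contDiff.comp contDiff_snd).add contDiff_const)
  have mapQ : MapsTo (fun p : ℝ × EuclideanSpace ℝ (Fin d) => (p.1, L p.2 + b))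
      (Ioo 0 T ×ˢ D) Q := fun p hp => ⟨hp.1, σD _ hp.2⟩
  have subQ : Ioo 0 T ×ˢ D ⊆ Q := prod_mono_right inter_subset_left
  have C2 : ∀ s ∈ Ioo 0 T, ∀ z ∈ ball x₀ R₀, ContDiffAt ℝ 2 (fun y => u s y ^ m) z := by
    intro s hs z hz
    have h1 : ContDiffAt ℝ 2 (fun p : ℝ × EuclideanSpace ℝ (Fin d) => u p.1 p.2 ^ m) (s, z) :=
      (hUs.contDiffAt (oQ.mem_nhds (show (s, z) ∈ Q from ⟨hs, hz⟩))).of_le (WithTop.coe_le_coe.2 (le_top : (2:ℕ∞) ≤ ⊤))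
    exact ContDiffAt.comp z (f := fun y => (s, y)) h1 (contDiff_prodMk_right s).contDiffAt
  have Dt : ∀ s ∈ Ioo 0 T, ∀ z ∈ ball x₀ R₀,
      HasDerivAt (fun s => u s z) (spaceLap (fun y => u s y ^ m) z) s := by
    intro s hs z hz
    rw [← hpde (s, z) ⟨hs, hz⟩]
    refine DifferentiableAt.hasDerivAt ?_
    have h1 : DifferentiableAt ℝ (fun p : ℝ × EuclideanSpace ℝ (Fin d) => u p.1 p.2) (s, z) :=
      (hsm.contDiffAt (oQ.mem_nhds (show (s, z) ∈ Q from ⟨hs, hz⟩))).differentiableAt (by simp)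
    exact DifferentiableAt.comp s (f := fun s => (s, z)) h1 (by fun_prop)
  have cUm : ContinuousOn (fun p : ℝ × EuclideanSpace ℝ (Fin d) => u p.1 p.2 ^ m)
      (Icc 0 T ×ˢ closedBall x₀ R₀) := hc.rpow_const (fun p _ => Or.inr hm.le)
  have mapK : MapsTo (fun p : ℝ × EuclideanSpace ℝ (Fin d) => (p.1, L p.2 + b))
      (Icc 0 T ×ˢ K) (Icc 0 T ×ˢ closedBall x₀ R₀) := fun p hp => ⟨hp.1, σK _ hp.2⟩
  have subK : Icc 0 T ×ˢ K ⊆ Icc 0 T ×ˢ closedBall x₀ R₀ := prod_mono_right inter_subset_left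
  have posD : ∀ s ∈ Ioo 0 T, ∀ z ∈ D, 0 < u s z ∧ 0 < u s (L z + b) := fun s hs z hz =>
    ⟨hpos (s, z) ⟨hs, hz.1⟩, hpos (s, L z + b) ⟨hs, σD z hz⟩⟩
  have main := fx_compare hd T D K oD cK DK
    (fun p => u p.1 p.2 ^ m - u p.1 (L p.2 + b) ^ m) (fun p => u p.1 p.2 - u p.1 (L p.2 + b))
    ((hUs.mono subQ).sub (hUs.comp hσs.contDiffOn mapQ)) ?_ ?_ ?_ ?_ ?_ ?_ ?_
  · have hxe : inner ℝ e (x - x₀) = n := by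
      rw [he, real_inner_smul_left, real_inner_self_eq_norm_sq, ← hn]; field_simp
    have hxD : x ∈ D := ⟨hx, by show κ < inner ℝ e (x - x₀); rw [hxe]; linarith⟩
    have h1 := main t ⟨h0, ht.2⟩ x hxD
    have h2 := posD t ⟨h0, ht.2⟩ x hxD
    have h3 : L x + b = x₀ + (1 / 2 : ℝ) • (x - x₀) := by
      rw [σx, hxe]
      have : (2 * (n - κ)) • e = (1 / 2 : ℝ) • (x - x₀) := by
        rw [he, smul_smul, hκ]
        congr 1
        field_simp
        ring
      rw [this]
      congr 1
      module
    rw [← h3]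
    simp only [sub_nonpos] at h1
    exact (Real.rpow_le_rpow_iff h2.1.le h2.2.le hm).1 h1
  · intro s hs z hz
    have e1 : spaceLap (fun y => u s y ^ m - u s (L y + b) ^ m) z =
        spaceLap (fun y => u s y ^ m) z - spaceLap (fun y => u s y ^ m) (L z + b) := by
      have A := C2 s hs z hz.1
      have B := C2 s hs _ (σD z hz)
      have B' : ContDiffAt ℝ 2 (fun y => u s (L y + b) ^ m) z :=
        ContDiffAt.comp z (f := fun y => L y + b) B (L.contDiff.add contDiff_const).contDiffAt
      rw [← fx_lap_comp L B, fx_lap_eq (A.sub B'), fx_lap_eq A, fx_lap_eq B']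
      exact A.laplacian_sub B'
    simp only
    rw [e1]
    exact (Dt s hs z hz.1).sub (Dt s hs _ (σD z hz))
  · intro s hs z hz h
    obtain ⟨h1, h2⟩ := posD s hs z hz
    simp only [sub_nonpos] at h ⊢
    exact Real.rpow_le_rpow h1.le h hm.le
  · intro s hs z hz h
    obtain ⟨h1, h2⟩ := posD s hs z hz
    simp only [sub_nonneg] at h ⊢
    exact Real.rpow_le_rpow h2.le h hm.le
  · exact (cUm.mono subK).sub (cUm.comp (hσs.continuous.continuousOn) mapK)
  · exact (hc.mono subK).sub (hc.comp (hσs.continuous.continuousOn) mapK)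
  · intro s hs z hz hzD
    simp only [sub_nonpos]
    by_cases hzb : z ∈ ball x₀ R₀
    · have h1 : ¬ κ < inner ℝ e (z - x₀) := fun h => hzD ⟨hzb, h⟩
      have h2 : inner ℝ e (z - x₀) = κ := le_antisymm (not_lt.1 h1) hz.2
      rw [σx, h2]
      simp
    · have hz1 := mem_closedBall.1 hz.1
      have hz2 : ¬ dist z x₀ < R₀ := hzb
      have hzs : z ∈ sphere x₀ R₀ := le_antisymm hz1 (not_lt.1 hz2)
      rw [hbd s ⟨hs.1, hs.2.le⟩ z hzs, Real.zero_rpow hm.ne']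
      exact Real.rpow_nonneg (hnn s ⟨hs.1.le, hs.2.le⟩ _ (σK z hz)) _
  · intro z hz
    have hzn : R < ‖z - x₀‖ := by
      have h1 := real_inner_le_norm e (z - x₀)
      rw [ne, one_mul] at h1
      have : κ < inner ℝ e (z - x₀) := hz.2
      linarith
    simp only [hu0 z hz.1 hzn]
    have := hnn 0 ⟨le_rfl, by linarith [ht.2]⟩ _ (σK z (DK hz))
    linarith

theorem fx_eta : ∃ A : ℝ, 0 < A ∧ (∀ y, |deriv Real.smoothTransition y| ≤ A) ∧
    ∀ y, |deriv (deriv Real.smoothTransition) y| ≤ A := by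
  have hs : ContDiff ℝ ∞ Real.smoothTransition := Real.smoothTransition.contDiff
  have hs1 : ContDiff ℝ ∞ (deriv Real.smoothTransition) := (contDiff_infty_iff_deriv.1 hs).2
  have hs2 : ContDiff ℝ ∞ (deriv (deriv Real.smoothTransition)) :=
    (contDiff_infty_iff_deriv.1 hs1).2
  have c1 : HasCompactSupport (deriv Real.smoothTransition) := by
    refine HasCompactSupport.intro (isCompact_Icc (a := (0:ℝ)) (b := 1)) fun x hx => ?_
    rcases lt_or_ge x 0 with h | h
    · have : Real.smoothTransition =ᶠ[𝓝 x] fun _ => 0 := by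
        filter_upwards [Iio_mem_nhds h] with y hy
        exact Real.smoothTransition.zero_of_nonpos (le_of_lt hy)
      rw [this.deriv_eq]; simp
    · have h1 : 1 < x := by
        by_contra h'
        exact hx ⟨h, not_lt.1 h'⟩
      have : Real.smoothTransition =ᶠ[𝓝 x] fun _ => 1 := by
        filter_upwards [Ioi_mem_nhds h1] with y hy
        exact Real.smoothTransition.one_of_one_le (le_of_lt hy)
      rw [this.deriv_eq]; simp
  obtain ⟨A1, h1⟩ := hs1.continuous.bounded_above_of_compact_support c1
  obtain ⟨A2, h2⟩ := hs2.continuous.bounded_above_of_compact_support c1.deriv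
  refine ⟨max 1 (max A1 A2), by positivity, fun y => (h1 y).trans ?_, fun y => (h2 y).trans ?_⟩
  · simp
  · simp

theorem fx_lap_radial {d : ℕ} (g : ℝ → ℝ) (hg : ContDiff ℝ ∞ g) (x₀ x : EuclideanSpace ℝ (Fin d)) :
    spaceLap (fun y => g (‖y - x₀‖ ^ 2)) x =
      4 * ‖x - x₀‖ ^ 2 * deriv (deriv g) (‖x - x₀‖ ^ 2) + 2 * d * deriv g (‖x - x₀‖ ^ 2) := by
  have hg1 : ContDiff ℝ ∞ (deriv g) := (contDiff_infty_iff_deriv.1 hg).2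
  have key : ∀ (h : ℝ → ℝ), ContDiff ℝ ∞ h → ∀ y v : EuclideanSpace ℝ (Fin d),
      HasFDerivAt (fun y => h (‖y - x₀‖ ^ 2))
        (deriv h (‖y - x₀‖ ^ 2) • ((2:ℝ) • innerSL ℝ (y - x₀))) y := by
    intro h hh y v
    have h1 : HasFDerivAt (fun y : EuclideanSpace ℝ (Fin d) => ‖y - x₀‖ ^ 2)
        ((2:ℝ) • innerSL ℝ (y - x₀)) y := by
      have := ((hasFDerivAt_id y).sub_const x₀).norm_sq
      refine HasFDerivAt.congr_fderiv this ?_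
      ext z
      simp only [id, two_smul]
      rfl
    exact ((hh.differentiable (by simp)) _).hasDerivAt.comp_hasFDerivAt y h1
  have hi : ∀ (i : Fin d) (y : EuclideanSpace ℝ (Fin d)),
      inner ℝ (y - x₀) (EuclideanSpace.single i (1:ℝ)) = (y - x₀) i := by
    intro i y
    simp [EuclideanSpace.inner_single_right]
  unfold spaceLap
  have step : ∀ i : Fin d, fderiv ℝ (fun y => fderiv ℝ (fun y => g (‖y - x₀‖ ^ 2)) y
      (EuclideanSpace.single i 1)) x (EuclideanSpace.single i 1) =
      4 * deriv (deriv g) (‖x - x₀‖ ^ 2) * ((x - x₀) i) ^ 2 + 2 * deriv g (‖x - x₀‖ ^ 2) := by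
    intro i
    have e1 : (fun y => fderiv ℝ (fun y => g (‖y - x₀‖ ^ 2)) y
      (EuclideanSpace.single i 1)) = fun y => deriv g (‖y - x₀‖ ^ 2) *
        (2 * inner ℝ (y - x₀) (EuclideanSpace.single i (1:ℝ))) := by
      funext y
      rw [(key g hg y 0).fderiv]
      simp only [FunLike.coe_smul, Pi.smul_apply, innerSL_apply_apply, smul_eq_mul]
    rw [e1]
    have h2 : HasFDerivAt (fun y : EuclideanSpace ℝ (Fin d) =>
        2 * inner ℝ (y - x₀) (EuclideanSpace.single i (1:ℝ)))
        ((2:ℝ) • innerSL ℝ (EuclideanSpace.single i (1:ℝ))) x := by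
      have h3 := (((innerSL ℝ (EuclideanSpace.single i (1:ℝ))).hasFDerivAt (x := x - x₀)).comp x
        ((hasFDerivAt_id x).sub_const x₀)).const_mul 2
      have e3 : (fun y : EuclideanSpace ℝ (Fin d) =>
          2 * inner ℝ (y - x₀) (EuclideanSpace.single i (1:ℝ))) =
          fun y => 2 * ((innerSL ℝ (EuclideanSpace.single i (1:ℝ))) ∘ fun x => id x - x₀) y := by
        funext y
        simp only [Function.comp, innerSL_apply_apply, id]
        rw [real_inner_comm]
      rw [e3]
      refine HasFDerivAt.congr_fderiv h3 ?_
      rfl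
    have h4 := ((key _ hg1 x 0).mul h2).fderiv
    change fderiv ℝ (fun y => deriv g (‖y - x₀‖ ^ 2) *
        (2 * inner ℝ (y - x₀) (EuclideanSpace.single i (1:ℝ)))) x = _ at h4
    rw [h4]
    simp only [FunLike.coe_add, FunLike.coe_smul, Pi.add_apply, Pi.smul_apply, innerSL_apply_apply,
      smul_eq_mul, hi]
    have : inner ℝ (EuclideanSpace.single i (1:ℝ)) (EuclideanSpace.single i (1:ℝ) : EuclideanSpace ℝ (Fin d)) = (1:ℝ) := by
      simp
    rw [this]
    ring
  rw [Finset.sum_congr rfl fun i _ => step i, Finset.sum_add_distrib, ← Finset.mul_sum,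
    ← EuclideanSpace.real_norm_sq_eq]
  simp
  ring

theorem fx_test (d : ℕ) : ∃ C : ℝ, 0 < C ∧ ∀ (x₀ : EuclideanSpace ℝ (Fin d)) (R R₀ : ℝ), 0 < R →
    2 * R < R₀ → ∃ φ : EuclideanSpace ℝ (Fin d) → ℝ, ContDiff ℝ ∞ φ ∧
      (∀ x, 0 ≤ φ x) ∧ (∀ x, φ x ≤ 1) ∧ (∀ x, ‖x - x₀‖ ≤ R + R₀ / 2 → φ x = 1) ∧
      HasCompactSupport φ ∧ tsupport φ ⊆ ball x₀ R₀ ∧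
      (∀ x ∈ ball x₀ (2 * R), spaceLap φ x = 0) ∧
      ∀ x ∈ ball x₀ R₀, |spaceLap φ x| ≤ C / (R₀ - 2 * R) ^ 2 := by
  obtain ⟨A, hA, hA1, hA2⟩ := fx_eta
  refine ⟨64 * A + 8 * d * A, by positivity, fun x₀ R R₀ hR hRR => ?_⟩
  obtain ⟨L, hL⟩ : ∃ L, L = R₀ - 2 * R := ⟨_, rfl⟩
  have Lp : 0 < L := by linarith
  obtain ⟨r1, hr1⟩ : ∃ r, r = R + R₀ / 2 := ⟨_, rfl⟩
  obtain ⟨r2, hr2⟩ : ∃ r, r = r1 + L / 4 := ⟨_, rfl⟩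
  have h12 : r1 < r2 := by linarith
  have h2R : r2 < R₀ := by linarith
  have hp1 : 0 < r1 := by linarith
  obtain ⟨w, hw⟩ : ∃ w, w = r2 ^ 2 - r1 ^ 2 := ⟨_, rfl⟩
  have wL : L / 4 * R₀ ≤ w := by
    have : w = L / 4 * (r1 + r2) := by rw [hw, hr2]; ring
    rw [this]
    gcongr
    linarith
  have R0p : 0 < R₀ := by linarith
  have wp : 0 < w := lt_of_lt_of_le (by positivity) wL
  set g : ℝ → ℝ := fun q => Real.smoothTransition ((r2 ^ 2 - q) / w) with hg
  have hη : ContDiff ℝ ∞ Real.smoothTransition := Real.smoothTransition.contDiff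
  have hη1 : ContDiff ℝ ∞ (deriv Real.smoothTransition) := (contDiff_infty_iff_deriv.1 hη).2
  have gs : ContDiff ℝ ∞ g := hη.comp ((contDiff_const.sub contDiff_id).div_const _)
  have hlin : ∀ q, HasDerivAt (fun q => (r2 ^ 2 - q) / w) (-1 / w) q := fun q =>
    ((hasDerivAt_id q).const_sub _).div_const w
  have g1 : deriv g = fun q => deriv Real.smoothTransition ((r2 ^ 2 - q) / w) * (-1 / w) := by
    funext q
    exact (((hη.differentiable (by simp)) _).hasDerivAt.comp q (hlin q)).deriv
  have g2 : ∀ q, deriv (deriv g) q =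
      deriv (deriv Real.smoothTransition) ((r2 ^ 2 - q) / w) * (-1 / w) * (-1 / w) := by
    intro q
    rw [g1]
    exact ((((hη1.differentiable (by simp)) _).hasDerivAt.comp q (hlin q)).mul_const _).deriv
  have hone : ∀ x : EuclideanSpace ℝ (Fin d), ‖x - x₀‖ ≤ r1 → g (‖x - x₀‖ ^ 2) = 1 := by
    intro x hx
    refine Real.smoothTransition.one_of_one_le ?_
    rw [le_div_iff₀ wp, hw]
    nlinarith [norm_nonneg (x - x₀)]
  have hsub : tsupport (fun x => g (‖x - x₀‖ ^ 2)) ⊆ closedBall x₀ r2 := by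
    refine closure_minimal ?_ isClosed_closedBall
    intro x hx
    by_contra h
    rw [mem_closedBall_iff_norm, not_le] at h
    refine hx (Real.smoothTransition.zero_of_nonpos ?_)
    refine div_nonpos_of_nonpos_of_nonneg ?_ wp.le
    nlinarith [norm_nonneg (x - x₀)]
  refine ⟨fun x => g (‖x - x₀‖ ^ 2), gs.comp ((contDiff_id.sub contDiff_const).norm_sq ℝ),
    fun x => Real.smoothTransition.nonneg _, fun x => Real.smoothTransition.le_one _, ?_, ?_, ?_,
    ?_, ?_⟩
  · rw [← hr1]; exact hone
  · exact (isCompact_closedBall x₀ r2).of_isClosed_subset (isClosed_tsupport _) hsub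
  · exact hsub.trans (closedBall_subset_ball h2R)
  · intro x hx
    have h1 : (fun y => g (‖y - x₀‖ ^ 2)) =ᶠ[𝓝 x] fun _ => (1:ℝ) := by
      filter_upwards [isOpen_ball.mem_nhds hx] with y hy
      exact hone y (by have := mem_ball_iff_norm.1 hy; linarith)
    unfold spaceLap
    refine Finset.sum_eq_zero fun i _ => ?_
    have h2 : (fun y => fderiv ℝ (fun y => g (‖y - x₀‖ ^ 2)) y (EuclideanSpace.single i 1))
        =ᶠ[𝓝 x] fun _ => (0:ℝ) := by
      filter_upwards [h1.fderiv (𝕜 := ℝ)] with y hy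
      rw [hy]; simp
    rw [h2.fderiv_eq]; simp
  · intro x hx
    have hq : ‖x - x₀‖ ^ 2 ≤ R₀ ^ 2 := by
      have := mem_ball_iff_norm.1 hx
      gcongr
    rw [fx_lap_radial g gs, g2, g1, ← hL]
    beta_reduce
    have hq0 : 0 ≤ ‖x - x₀‖ ^ 2 := by positivity
    generalize ‖x - x₀‖ ^ 2 = q at *
    have b1 := hA1 ((r2 ^ 2 - q) / w)
    have b2 := hA2 ((r2 ^ 2 - q) / w)
    generalize deriv Real.smoothTransition ((r2 ^ 2 - q) / w) = α at *
    generalize deriv (deriv Real.smoothTransition) ((r2 ^ 2 - q) / w) = β at *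
    have c1 : 1 / w ≤ 4 / L ^ 2 := by
      rw [div_le_div_iff₀ wp (by positivity)]
      nlinarith
    have c2 : q * (1 / w ^ 2) ≤ 16 / L ^ 2 := by
      have : (L / 4 * R₀) ^ 2 ≤ w ^ 2 := by gcongr
      rw [mul_one_div, div_le_div_iff₀ (by positivity) (by positivity)]
      nlinarith [mul_le_mul_of_nonneg_right hq (sq_nonneg L)]
    have e : 4 * q * (β * (-1 / w) * (-1 / w)) + 2 * d * (α * (-1 / w)) =
        4 * (q * (1 / w ^ 2)) * β - 2 * d * (1 / w) * α := by
      field_simp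
      try ring
    rw [e]
    have i1 : |4 * (q * (1 / w ^ 2)) * β| ≤ 4 * (16 / L ^ 2) * A := by
      rw [abs_mul, abs_of_nonneg (by positivity)]
      gcongr
    have i2 : |2 * d * (1 / w) * α| ≤ 2 * d * (4 / L ^ 2) * A := by
      rw [abs_mul, abs_of_nonneg (by positivity)]
      gcongr
    calc _ ≤ _ := abs_sub _ _
      _ ≤ _ := add_le_add i1 i2
      _ = _ := by field_simp; ring

theorem fx_cont_mul {E : Type*} [TopologicalSpace E]
    {U : Set E} (hU : IsOpen U) {χ h : E → ℝ} (hχ : Continuous χ)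
    (ht : tsupport χ ⊆ U) (hh : ContinuousOn h U) : Continuous (fun x => χ x * h x) := by
  refine continuous_of_tsupport fun x hx => ?_
  have hxU : x ∈ U := ht (tsupport_mul_subset_left hx)
  exact hχ.continuousAt.mul (hh.continuousAt (hU.mem_nhds hxU))

theorem fx_ibp1 {d : ℕ} {U : Set (EuclideanSpace ℝ (Fin d))} (hU : IsOpen U)
    {χ f : EuclideanSpace ℝ (Fin d) → ℝ} (hχ : ContDiff ℝ ∞ χ) (hc : HasCompactSupport χ)
    (ht : tsupport χ ⊆ U) (hf : ContDiffOn ℝ ∞ f U) (v : EuclideanSpace ℝ (Fin d)) :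
    Integrable (fun x => χ x * fderiv ℝ f x v) ∧ Integrable (fun x => fderiv ℝ χ x v * f x) ∧
    ∫ x, χ x * fderiv ℝ f x v = - ∫ x, fderiv ℝ χ x v * f x := by
  have hf1 : ContDiffOn ℝ ∞ (fun x => fderiv ℝ f x v) U :=
    (hf.fderiv_of_isOpen hU (m := ∞) (by simp)).clm_apply contDiffOn_const
  have hχ1 : ContDiff ℝ ∞ (fun x => fderiv ℝ χ x v) :=
    (hχ.fderiv_right (m := ∞) (by simp)).clm_apply contDiff_const
  have ht1 : tsupport (fun x => fderiv ℝ χ x v) ⊆ U := (tsupport_fderiv_apply_subset ℝ v).trans ht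
  have hc1 : HasCompactSupport (fun x => fderiv ℝ χ x v) := hc.fderiv_apply ℝ v
  have I1 : Integrable (fun x => χ x * fderiv ℝ f x v) :=
    (fx_cont_mul hU hχ.continuous ht hf1.continuousOn).integrable_of_hasCompactSupport
      hc.mul_right
  have I2 : Integrable (fun x => fderiv ℝ χ x v * f x) :=
    (fx_cont_mul hU hχ1.continuous ht1 hf.continuousOn).integrable_of_hasCompactSupport
      hc1.mul_right
  have I3 : Integrable (fun x => χ x * f x) :=
    (fx_cont_mul hU hχ.continuous ht hf.continuousOn).integrable_of_hasCompactSupport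
      hc.mul_right
  refine ⟨I1, I2, integral_mul_fderiv_eq_neg_fderiv_mul_of_integrable I2 I1 I3
    (fun x _ => (hχ.differentiable (by simp)) x) fun x hx =>
    (hf.contDiffAt (hU.mem_nhds (ht hx))).differentiableAt (by simp)⟩

theorem fx_ibp {d : ℕ} {U : Set (EuclideanSpace ℝ (Fin d))} (hU : IsOpen U)
    {χ f : EuclideanSpace ℝ (Fin d) → ℝ} (hχ : ContDiff ℝ ∞ χ) (hc : HasCompactSupport χ)
    (ht : tsupport χ ⊆ U) (hf : ContDiffOn ℝ ∞ f U) :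
    ∫ x, χ x * spaceLap f x = ∫ x, spaceLap χ x * f x := by
  unfold spaceLap
  simp only [Finset.mul_sum, Finset.sum_mul]
  have key : ∀ i : Fin d, _ := fun i => by
    have hf1 : ContDiffOn ℝ ∞ (fun x => fderiv ℝ f x (EuclideanSpace.single i 1)) U :=
      (hf.fderiv_of_isOpen hU (m := ∞) (by simp)).clm_apply contDiffOn_const
    have hχ1 : ContDiff ℝ ∞ (fun x => fderiv ℝ χ x (EuclideanSpace.single i 1)) :=
      (hχ.fderiv_right (m := ∞) (by simp)).clm_apply contDiff_const
    have ht1 : tsupport (fun x => fderiv ℝ χ x (EuclideanSpace.single i 1)) ⊆ U :=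
      (tsupport_fderiv_apply_subset ℝ _).trans ht
    have hc1 : HasCompactSupport (fun x => fderiv ℝ χ x (EuclideanSpace.single i 1)) :=
      hc.fderiv_apply ℝ _
    exact And.intro (fx_ibp1 hU hχ hc ht hf1 (EuclideanSpace.single i 1))
      (fx_ibp1 hU hχ1 hc1 ht1 hf (EuclideanSpace.single i 1))
  rw [integral_finsetSum _ fun i _ => (key i).1.1, integral_finsetSum _ fun i _ => (key i).2.2.1]
  refine Finset.sum_congr rfl fun i _ => ?_
  rw [(key i).1.2.2, (key i).2.2.2, neg_neg]

theorem fx_lap_const {d : ℕ} {f : EuclideanSpace ℝ (Fin d) → ℝ} {x : EuclideanSpace ℝ (Fin d)}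
    {c : ℝ} (h1 : f =ᶠ[𝓝 x] fun _ => c) : spaceLap f x = 0 := by
  unfold spaceLap
  refine Finset.sum_eq_zero fun i _ => ?_
  have h2 : (fun y => fderiv ℝ f y (EuclideanSpace.single i 1)) =ᶠ[𝓝 x] fun _ => (0:ℝ) := by
    filter_upwards [h1.fderiv (𝕜 := ℝ)] with y hy
    rw [hy]; simp
  rw [h2.fderiv_eq]; simp

theorem fx_flux {d : ℕ} (m : ℝ) (hm : 0 < m)
    (x₀ : EuclideanSpace ℝ (Fin d)) (R R₀ T : ℝ)
    (u : ℝ → EuclideanSpace ℝ (Fin d) → ℝ) (u₀ : EuclideanSpace ℝ (Fin d) → ℝ)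
    (hu : IsDirichletSol m x₀ R₀ T u u₀) (φ : EuclideanSpace ℝ (Fin d) → ℝ) (K : ℝ)
    (hφ : ContDiff ℝ ∞ φ) (φ0 : ∀ x, 0 ≤ φ x)
    (hcs : HasCompactSupport φ) (hts : tsupport φ ⊆ ball x₀ R₀)
    (hz : ∀ x ∈ ball x₀ (2 * R), spaceLap φ x = 0)
    (hb : ∀ x ∈ ball x₀ R₀, |spaceLap φ x| ≤ K) (s : ℝ) (hs0 : 0 ≤ s) (hsT : s ≤ T) :
    ∫ x, φ x * u s x ≤
      K * ∫ t in Ioc s T, ∫ x in ball x₀ R₀ \ ball x₀ (2 * R), u t x ^ m := by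
  obtain ⟨hnn, hc, ⟨hpos, hsm, hpde⟩, hini, hbd, hT, -⟩ := hu
  set A : Set (EuclideanSpace ℝ (Fin d)) := ball x₀ R₀ \ ball x₀ (2 * R) with hA
  have mA : MeasurableSet A := measurableSet_ball.diff measurableSet_ball
  have Ab : A ⊆ closedBall x₀ R₀ := sdiff_subset.trans ball_subset_closedBall
  have fA : volume A ≠ ⊤ := ((measure_mono sdiff_subset).trans_lt measure_ball_lt_top).ne
  have hφout : ∀ x, x ∉ ball x₀ R₀ → φ x = 0 := fun x hx =>
    image_eq_zero_of_notMem_tsupport fun h => hx (hts h)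
  obtain ⟨Q, hQ⟩ : ∃ Q : Set (ℝ × EuclideanSpace ℝ (Fin d)), Q = Ioo 0 T ×ˢ ball x₀ R₀ := ⟨_, rfl⟩
  rw [← hQ] at hpos hsm hpde
  have oQ : IsOpen Q := by rw [hQ]; exact isOpen_Ioo.prod isOpen_ball
  have inQ : ∀ t ∈ Ioo 0 T, ∀ x ∈ ball x₀ R₀, (t, x) ∈ Q := fun t ht x hx => by
    rw [hQ]; exact ⟨ht, hx⟩
  have hUs : ContDiffOn ℝ ∞ (fun p : ℝ × EuclideanSpace ℝ (Fin d) => u p.1 p.2 ^ m) Q :=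
    hsm.rpow_const_of_ne (fun p hp => (hpos p hp).ne')
  have cUm : ContinuousOn (fun p : ℝ × EuclideanSpace ℝ (Fin d) => u p.1 p.2 ^ m)
      (Icc 0 T ×ˢ closedBall x₀ R₀) := hc.rpow_const (fun p _ => Or.inr hm.le)
  have cX : ∀ t ∈ Icc 0 T, ContinuousOn (fun x => u t x) (closedBall x₀ R₀) := fun t ht =>
    hc.comp (f := fun x => (t, x)) (by fun_prop) fun x hx => ⟨ht, hx⟩
  have cXm : ∀ t ∈ Icc 0 T, ContinuousOn (fun x => u t x ^ m) (closedBall x₀ R₀) := fun t ht =>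
    cUm.comp (f := fun x => (t, x)) (by fun_prop) fun x hx => ⟨ht, hx⟩
  have cT : ∀ x ∈ closedBall x₀ R₀, ContinuousOn (fun t => u t x) (Icc 0 T) := fun x hx =>
    hc.comp (f := fun t => (t, x)) (by fun_prop) fun t ht => ⟨ht, hx⟩
  have cTm : ∀ x ∈ closedBall x₀ R₀, ContinuousOn (fun t => u t x ^ m) (Icc 0 T) := fun x hx =>
    cUm.comp (f := fun t => (t, x)) (by fun_prop) fun t ht => ⟨ht, hx⟩
  have cpt : IsCompact (Icc 0 T ×ˢ closedBall x₀ R₀) := isCompact_Icc.prod (isCompact_closedBall _ _)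
  obtain ⟨B1, hB1⟩ := cpt.exists_bound_of_continuousOn hc
  obtain ⟨B2, hB2⟩ := cpt.exists_bound_of_continuousOn cUm
  have Iφ : Integrable φ := hφ.continuous.integrable_of_hasCompactSupport hcs
  have cont1 : ∀ t ∈ Icc 0 T, Continuous (fun x => φ x * u t x) := fun t ht =>
    fx_cont_mul isOpen_ball hφ.continuous hts ((cX t ht).mono ball_subset_closedBall)
  have cM : ContinuousOn (fun t => ∫ x, φ x * u t x) (Icc 0 T) := by
    refine continuousOn_of_dominated (bound := fun x => φ x * B1)
      (fun t ht => (cont1 t ht).aestronglyMeasurable)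
      (fun t ht => Eventually.of_forall fun x => ?_) (Iφ.mul_const _)
      (Eventually.of_forall fun x => ?_)
    · by_cases hx : x ∈ ball x₀ R₀
      · rw [norm_mul, Real.norm_of_nonneg (φ0 x)]
        exact mul_le_mul_of_nonneg_left (hB1 (t, x) ⟨ht, ball_subset_closedBall hx⟩) (φ0 x)
      · simp [hφout x hx]
    · by_cases hx : x ∈ ball x₀ R₀
      · exact continuousOn_const.mul (cT x (ball_subset_closedBall hx))
      · simp only [hφout x hx, zero_mul]; exact continuousOn_const
  have iN : ∀ t ∈ Icc 0 T, IntegrableOn (fun x => u t x ^ m) A := fun t ht =>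
    ((cXm t ht).integrableOn_compact (isCompact_closedBall _ _)).mono_set Ab
  have cN : ContinuousOn (fun t => ∫ x in A, u t x ^ m) (Icc 0 T) := by
    refine continuousOn_of_dominated (bound := fun x => B2)
      (fun t ht => (iN t ht).aestronglyMeasurable)
      (fun t ht => (ae_restrict_mem mA).mono fun x hx => ?_) (integrableOn_const fA)
      ((ae_restrict_mem mA).mono fun x hx => cTm x (Ab hx))
    exact hB2 (t, x) ⟨ht, Ab hx⟩
  have hder : ∀ t ∈ Ioo 0 T, HasDerivAt (fun t => ∫ x, φ x * u t x)
      (∫ x, spaceLap φ x * u t x ^ m) t := by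
    intro t ht
    have hsl : ContDiffOn ℝ ∞ (fun x => u t x ^ m) (ball x₀ R₀) :=
      hUs.comp (f := fun x => (t, x)) (contDiff_prodMk_right t).contDiffOn fun x hx => inQ t ht x hx
    rw [← fx_ibp isOpen_ball hφ hcs hts hsl]
    obtain ⟨G, hG⟩ : ∃ G : ℝ × EuclideanSpace ℝ (Fin d) → ℝ, G = fun p => ∑ i : Fin d,
      fxD (EuclideanSpace.single i 1) (fxD (EuclideanSpace.single i 1)
        (fun p : ℝ × EuclideanSpace ℝ (Fin d) => u p.1 p.2 ^ m)) p := ⟨_, rfl⟩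
    have cG : ContinuousOn G Q := by
      rw [hG]
      exact continuousOn_finsetSum _ fun i _ =>
        (fxD_smooth _ oQ (fxD_smooth _ oQ hUs)).continuousOn
    have eG : ∀ t ∈ Ioo 0 T, ∀ x ∈ ball x₀ R₀, spaceLap (fun y => u t y ^ m) x = G (t, x) := by
      intro t ht x hx
      rw [hG]
      exact fx_spaceLap oQ hUs t x (inQ t ht x hx)
    obtain ⟨a, ha0, hat⟩ := exists_between ht.1
    obtain ⟨b, htb, hbT⟩ := exists_between ht.2
    have sub : Icc a b ×ˢ tsupport φ ⊆ Q := fun p hp =>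
      inQ p.1 ⟨ha0.trans_le hp.1.1, hp.1.2.trans_lt hbT⟩ p.2 (hts hp.2)
    obtain ⟨B, hB⟩ := (isCompact_Icc.prod hcs).exists_bound_of_continuousOn (cG.mono sub)
    have cGt : ContinuousOn (fun x => spaceLap (fun y => u t y ^ m) x) (ball x₀ R₀) :=
      (cG.comp (f := fun x => (t, x)) (by fun_prop) fun x hx => inQ t ht x hx).congr
        fun x hx => eG t ht x hx
    refine (hasDerivAt_integral_of_dominated_loc_of_deriv_le (bound := fun x => φ x * B)
      (F' := fun t x => φ x * spaceLap (fun y => u t y ^ m) x)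
      (Icc_mem_nhds hat htb) ?_ ?_ ?_ ?_ ?_ ?_).2
    · filter_upwards [Ioo_mem_nhds ht.1 ht.2] with r hr
      exact (cont1 r ⟨hr.1.le, hr.2.le⟩).aestronglyMeasurable
    · exact (cont1 t ⟨ht.1.le, ht.2.le⟩).integrable_of_hasCompactSupport hcs.mul_right
    · exact (fx_cont_mul isOpen_ball hφ.continuous hts cGt).aestronglyMeasurable
    · refine Eventually.of_forall fun x r hr => ?_
      by_cases hx : x ∈ tsupport φ
      · rw [norm_mul, Real.norm_of_nonneg (φ0 x),
          eG r ⟨ha0.trans_le hr.1, hr.2.trans_lt hbT⟩ x (hts hx)]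
        exact mul_le_mul_of_nonneg_left (hB (r, x) ⟨hr, hx⟩) (φ0 x)
      · simp [image_eq_zero_of_notMem_tsupport hx]
    · exact Iφ.mul_const _
    · refine Eventually.of_forall fun x r hr => ?_
      by_cases hx : x ∈ ball x₀ R₀
      · have hrx := inQ r ⟨ha0.trans_le hr.1, hr.2.trans_lt hbT⟩ x hx
        refine HasDerivAt.const_mul _ ?_
        rw [← hpde (r, x) hrx]
        refine DifferentiableAt.hasDerivAt ?_
        have h1 : DifferentiableAt ℝ (fun p : ℝ × EuclideanSpace ℝ (Fin d) => u p.1 p.2) (r, x) :=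
          (hsm.contDiffAt (oQ.mem_nhds hrx)).differentiableAt (by simp)
        exact DifferentiableAt.comp r (f := fun s => (s, x)) h1 (by fun_prop)
      · simp only [hφout x hx, zero_mul]
        exact hasDerivAt_const _ _
  have hle : ∀ t ∈ Ioo 0 T, -(∫ x, spaceLap φ x * u t x ^ m) ≤ K * ∫ x in A, u t x ^ m := by
    intro t ht
    have ht' : t ∈ Icc 0 T := ⟨ht.1.le, ht.2.le⟩
    have e1 : ∫ x in A, spaceLap φ x * u t x ^ m = ∫ x, spaceLap φ x * u t x ^ m := by
      refine setIntegral_eq_integral_of_forall_compl_eq_zero fun x hx => ?_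
      by_cases h1 : x ∈ ball x₀ R₀
      · have h2 : x ∈ ball x₀ (2 * R) := by
          by_contra h
          exact hx ⟨h1, h⟩
        rw [hz x h2, zero_mul]
      · have h2 : x ∉ tsupport φ := fun h => h1 (hts h)
        rw [fx_lap_const (c := 0) (notMem_tsupport_iff_eventuallyEq.1 h2), zero_mul]
    rw [← e1, ← integral_const_mul]
    refine (neg_le_abs _).trans ?_
    refine norm_integral_le_of_norm_le (f := fun x => spaceLap φ x * u t x ^ m) ((iN t ht').const_mul K)
      ((ae_restrict_mem mA).mono fun x hx => ?_)
    have h0 : 0 ≤ u t x ^ m := Real.rpow_nonneg (hnn t ht' x (Ab hx)) _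
    rw [norm_mul, Real.norm_of_nonneg h0]
    exact mul_le_mul_of_nonneg_right (hb x hx.1) h0
  have sub : Icc s T ⊆ Icc 0 T := Icc_subset_Icc_left hs0
  have main := intervalIntegral.sub_le_integral_of_hasDeriv_right_of_le hsT
    (g := fun t => -∫ x, φ x * u t x) (g' := fun t => -(∫ x, spaceLap φ x * u t x ^ m))
    (φ := fun t => K * ∫ x in A, u t x ^ m) (cM.mono sub).neg
    (fun t ht => (hder t ⟨hs0.trans_lt ht.1, ht.2⟩).neg.hasDerivWithinAt)
    ((continuousOn_const.mul (cN.mono sub)).integrableOn_Icc)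
    (fun t ht => hle t ⟨hs0.trans_lt ht.1, ht.2⟩)
  have zT : ∫ x, φ x * u T x = 0 := by
    rw [← integral_zero (EuclideanSpace ℝ (Fin d)) ℝ]
    congr 1
    funext x
    by_cases hx : x ∈ ball x₀ R₀
    · rw [hT x (ball_subset_closedBall hx), mul_zero]
    · rw [hφout x hx, zero_mul]
  simp only [zT] at main
  rw [intervalIntegral.integral_of_le hsT, integral_const_mul] at main
  linarith

theorem fx_dilate {d : ℕ} (f : EuclideanSpace ℝ (Fin d) → ℝ) (x₀ : EuclideanSpace ℝ (Fin d)) :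
    ∫ x, f (x₀ + (1 / 2 : ℝ) • (x - x₀)) = 2 ^ d * ∫ x, f x := by
  rw [integral_sub_right_eq_self (fun x => f (x₀ + (1 / 2 : ℝ) • x)) x₀,
    Measure.integral_comp_smul volume (fun x => f (x₀ + x)), integral_add_left_eq_self]
  simp

theorem fx_dilate_int {d : ℕ} (f : EuclideanSpace ℝ (Fin d) → ℝ) (x₀ : EuclideanSpace ℝ (Fin d))
    (hf : Integrable f) : Integrable (fun x => f (x₀ + (1 / 2 : ℝ) • (x - x₀))) :=
  (((hf.comp_add_left x₀).comp_smul (by norm_num : (1 / 2 : ℝ) ≠ 0)).comp_sub_right x₀)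

theorem fx_mass {d : ℕ} (hd : 1 ≤ d) (m : ℝ) (hm : 0 < m)
    (x₀ : EuclideanSpace ℝ (Fin d)) (R R₀ T : ℝ) (hR : 0 < R) (hRR : 2 * R < R₀)
    (u : ℝ → EuclideanSpace ℝ (Fin d) → ℝ) (u₀ : EuclideanSpace ℝ (Fin d) → ℝ)
    (hsupp : Function.support u₀ ⊆ closedBall x₀ R)
    (hu : IsDirichletSol m x₀ R₀ T u u₀) (φ : EuclideanSpace ℝ (Fin d) → ℝ)
    (hφ : Continuous φ) (φ0 : ∀ x, 0 ≤ φ x) (φ1 : ∀ x, ‖x - x₀‖ ≤ R + R₀ / 2 → φ x = 1)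
    (hcs : HasCompactSupport φ) (hts : tsupport φ ⊆ ball x₀ R₀)
    (s : ℝ) (hs : s ∈ Ico 0 T) :
    ∫ x in ball x₀ R₀, u s x ≤ (1 + 2 ^ d) * ∫ x, φ x * u s x := by
  have half := fx_half hd m hm x₀ R R₀ T hR hRR u u₀ hsupp hu s hs
  obtain ⟨hnn, hc, -⟩ := hu
  have hs' : s ∈ Icc 0 T := ⟨hs.1, hs.2.le⟩
  have cX : ContinuousOn (fun x => u s x) (closedBall x₀ R₀) :=
    hc.comp (f := fun x => (s, x)) (by fun_prop) fun x hx => ⟨hs', hx⟩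
  have iB : IntegrableOn (fun x => u s x) (ball x₀ R₀) :=
    (cX.integrableOn_compact (isCompact_closedBall _ _)).mono_set ball_subset_closedBall
  have hφout : ∀ x, x ∉ ball x₀ R₀ → φ x = 0 := fun x hx =>
    image_eq_zero_of_notMem_tsupport fun h => hx (hts h)
  obtain ⟨f, hf⟩ : ∃ f : EuclideanSpace ℝ (Fin d) → ℝ, f = fun x => φ x * u s x := ⟨_, rfl⟩
  have f0 : ∀ x, 0 ≤ f x := by
    intro x
    rw [hf]
    by_cases hx : x ∈ ball x₀ R₀
    · exact mul_nonneg (φ0 x) (hnn s hs' x (ball_subset_closedBall hx))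
    · simp [hφout x hx]
  have f1 : ∀ x, ‖x - x₀‖ ≤ R + R₀ / 2 → f x = u s x := fun x hx => by
    rw [hf]; simp [φ1 x hx]
  have If : Integrable f := by
    rw [hf]
    exact (fx_cont_mul isOpen_ball hφ hts
      (cX.mono ball_subset_closedBall)).integrable_of_hasCompactSupport hcs.mul_right
  have hsub : ball x₀ (R + R₀ / 2) ⊆ ball x₀ R₀ := ball_subset_ball (by linarith)
  have hsplit := integral_inter_add_sdiff (f := fun x => u s x) (μ := volume) (s := ball x₀ R₀)
    (t := ball x₀ (R + R₀ / 2)) measurableSet_ball iB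
  rw [inter_eq_self_of_subset_right hsub] at hsplit
  have b1 : ∫ x in ball x₀ (R + R₀ / 2), u s x ≤ ∫ x, f x := by
    rw [setIntegral_congr_fun (g := f) measurableSet_ball
      (fun x hx => (f1 x (mem_ball_iff_norm.1 hx).le).symm)]
    exact setIntegral_le_integral If (Eventually.of_forall f0)
  have b2 : ∫ x in ball x₀ R₀ \ ball x₀ (R + R₀ / 2), u s x ≤ 2 ^ d * ∫ x, f x := by
    rw [← fx_dilate f x₀]
    have I := fx_dilate_int f x₀ If
    refine le_trans ?_ (setIntegral_le_integral (s := ball x₀ R₀ \ ball x₀ (R + R₀ / 2)) I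
      (Eventually.of_forall fun x => f0 _))
    refine setIntegral_mono_on (iB.mono_set sdiff_subset) I.integrableOn
      (measurableSet_ball.diff measurableSet_ball) fun x hx => ?_
    have h1 : ‖x - x₀‖ < R₀ := mem_ball_iff_norm.1 hx.1
    have h2 : R + R₀ / 2 ≤ ‖x - x₀‖ := by
      have := hx.2
      rw [mem_ball_iff_norm, not_lt] at this
      exact this
    rw [f1]
    · exact half x hx.1 (by linarith)
    · rw [add_sub_cancel_left, norm_smul]
      norm_num
      linarith
  rw [← hsplit]
  rw [hf] at b1 b2
  linarith

/-- **Flux Lemma (Lemma 2.1).** -/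
theorem flux_lemma
    (d : ℕ) (hd : 1 ≤ d) :
    ∃ k₀ : ℝ, 0 < k₀ ∧
      ∀ (m : ℝ), 0 < m → m < 1 →
      ∀ (x₀ : EuclideanSpace ℝ (Fin d)) (R R₀ T : ℝ), 0 < R → 2 * R < R₀ → 0 < T →
      ∀ (u : ℝ → EuclideanSpace ℝ (Fin d) → ℝ) (u₀ : EuclideanSpace ℝ (Fin d) → ℝ),
        (∀ x, 0 ≤ u₀ x) →
        (Function.support u₀ ⊆ closedBall x₀ R) →
        IsDirichletSol m x₀ R₀ T u u₀ →
      ∀ s : ℝ, 0 ≤ s → s ≤ T →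
        k₀ * (R₀ - 2 * R) ^ 2 * ∫ x in ball x₀ R₀, u s x ≤
          ∫ t in Ioc s T, ∫ x in ball x₀ R₀ \ ball x₀ (2 * R), u t x ^ m := by
  obtain ⟨C, hC, htest⟩ := fx_test d
  refine ⟨1 / ((1 + 2 ^ d) * C), by positivity, ?_⟩
  intro m hm _ x₀ R R₀ T hR hRR _ u u₀ _ hsupp hu s hs0 hsT
  rcases hsT.eq_or_lt with rfl | hlt
  · have h0 : ∫ x in ball x₀ R₀, u s x = 0 := by
      rw [setIntegral_congr_fun (g := fun _ => (0:ℝ)) measurableSet_ball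
        (fun x hx => hu.2.2.2.2.2.1 x (ball_subset_closedBall hx))]
      simp
    rw [h0]; simp
  obtain ⟨φ, hφ, φ0, -, φ1, hcs, hts, hz, hb⟩ := htest x₀ R R₀ hR hRR
  have h1 := fx_mass hd m hm x₀ R R₀ T hR hRR u u₀ hsupp hu φ hφ.continuous φ0 φ1 hcs hts s
    ⟨hs0, hlt⟩
  have h2 := fx_flux m hm x₀ R R₀ T u u₀ hu φ _ hφ φ0 hcs hts hz hb s hs0 hsT
  have L : 0 < R₀ - 2 * R := by linarith
  generalize (∫ t in Ioc s T, ∫ x in ball x₀ R₀ \ ball x₀ (2 * R), u t x ^ m) = J at *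
  calc _ ≤ 1 / ((1 + 2 ^ d) * C) * (R₀ - 2 * R) ^ 2 *
        ((1 + 2 ^ d) * (C / (R₀ - 2 * R) ^ 2 * J)) := by
        refine mul_le_mul_of_nonneg_left (h1.trans ?_) (by positivity)
        exact mul_le_mul_of_nonneg_left h2 (by positivity)
    _ = J := by field_simp
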